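/- arXiv:1705.04289 — 5 statements merged into one kernel-verified Lean document; each statement's English description precedes it below -/
import Mathlib

section
/- Let H, χ be real numbers with H·χ > 1, and let w > 0 satisfy w·exp(w) = (H·χ − 1)/e. Then t := (H·χ − 1)/w satisfies t·ln(t) = t + H·χ − 1. (Key step in the proof of Theorem 1: t = (Hχ−1)/W((Hχ−1)/e) solves the reduced stationarity equation t·ln t = t + Hχ − 1.) -/
theorem div_eq_exp_add_one_of_mul_exp_eq {a w : ℝ} (hw : w ≠ 0)
    (h : w * Real.exp w = a / Real.exp 1) : a / w = Real.exp (w + 1) := by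
  rw [div_eq_iff hw]
  calc
    a = w * Real.exp w * Real.exp 1 := ((eq_div_iff (Real.exp_ne_zero 1)).mp h).symm
    _ = Real.exp (w + 1) * w := by rw [Real.exp_add]; ring

/-- The number `w` may be the value at `a / e` of either real branch of the Lambert W function. -/
theorem stmt_1_general {a w : ℝ} (hw : w ≠ 0) (h : w * Real.exp w = a / Real.exp 1) :
    (a / w) * Real.log (a / w) = a / w + a := by
  have log_eq : Real.log (a / w) = w + 1 := by
    rw [div_eq_exp_add_one_of_mul_exp_eq hw h, Real.log_exp]
  calc
    (a / w) * Real.log (a / w) = a / w + a / w * w := by rw [log_eq]; ring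
    _ = a / w + a := by rw [div_mul_cancel₀ a hw]

/-- Key step in the proof of Theorem 1: if `H * χ > 1` and `w > 0` satisfies
`w * exp w = (H * χ - 1) / e`, then `t := (H * χ - 1) / w` satisfies
`t * ln t = t + H * χ - 1`. -/
theorem stmt_1 (H χ : ℝ) (hHχ : H * χ > 1) (w : ℝ) (hw : 0 < w)
    (hlam : w * Real.exp w = (H * χ - 1) / Real.exp 1) :
    ((H * χ - 1) / w) * Real.log ((H * χ - 1) / w)
      = (H * χ - 1) / w + H * χ - 1 := by
  rw [add_sub_assoc]
  exact stmt_1_general hw.ne' hlam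
end

section
/- Fix real parameters T, τ, ε, χ, H with T > 0, 0 < τ < T, ε > 0, χ > 0, H > 0 and H·χ > 1. Set c := χ·(T − τ) − ε and assume c > 0. Let w > 0 satisfy w·exp(w) = (H·χ − 1)/e, and define θ* := (T − τ)/T − w·H·c / (T·(H·χ − 1)·(1 + w)). Then a* := T − θ*·T − τ > 0, b* := χ·θ*·T − ε > 0, and the stationarity equation ln(1 + H·b*/a*) = H·(χ·a* + b*)/(a* + H·b*) holds. (Verification part of Theorem 1: the closed-form harvesting ratio θ* = (T−τ)/T − W((Hχ−1)/e)·H·(χT − χτ − ε)/(T(Hχ−1)(1 + W((Hχ−1)/e))) is a stationary point of the rate function.) -/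
/-!
Write `E = exp (w + 1)`, so that the Lambert equation reads `H * χ - 1 = w * E`. The closed form of
`θ*` says exactly that `H * c = (1 + w) * E * a`, where `c = χ * a + b` is the energy that would be
left if the whole transmission time `a` were spent harvesting. Subtracting `(H * χ - 1) * a` gives
`a + H * b = E * a`. Hence `1 + H * b / a = E`, whose logarithm is `w + 1`, and the right-hand side
of the stationarity equation is `H * c / (E * a) = 1 + w` as well.
-/

open Real

namespace EnergyHarvesting

theorem mul_exp_add_one_of_mul_exp_eq_div {w K : ℝ} (h : w * exp w = K / exp 1) :
    w * exp (w + 1) = K := by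
  rw [exp_add, ← mul_assoc, h, div_mul_cancel₀ K (exp_ne_zero 1)]

theorem transmission_time_eq {T τ θ H c K w : ℝ} (hT : T ≠ 0) (hK : K ≠ 0)
    (hw : w * exp (w + 1) = K)
    (hθ : θ = (T - τ) / T - w * H * c / (T * K * (1 + w))) :
    T - θ * T - τ = H * c / ((1 + w) * exp (w + 1)) := by
  have hw0 : w ≠ 0 := left_ne_zero_of_mul (hw.trans_ne hK)
  calc T - θ * T - τ = w * H * c / (K * (1 + w)) := by rw [hθ]; field_simp; ring
    _ = w * (H * c) / (w * ((1 + w) * exp (w + 1))) := by rw [← hw]; ring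
    _ = H * c / ((1 + w) * exp (w + 1)) := mul_div_mul_left _ _ hw0

section Stationarity

variable {H χ w a b : ℝ}

theorem add_mul_eq_exp_mul (hw : w * exp (w + 1) = H * χ - 1)
    (hab : H * (χ * a + b) = (1 + w) * exp (w + 1) * a) :
    a + H * b = exp (w + 1) * a := by
  linear_combination hab + a * hw

theorem residual_energy_pos (hH : 0 < H) (ha : 0 < a) (hw1 : -1 < w)
    (hw : w * exp (w + 1) = H * χ - 1)
    (hab : H * (χ * a + b) = (1 + w) * exp (w + 1) * a) : 0 < b := by
  have hexp : 1 < exp (w + 1) := one_lt_exp_iff.mpr (by linarith)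
  have hHb : H * b = (exp (w + 1) - 1) * a := by
    linear_combination add_mul_eq_exp_mul hw hab
  exact pos_of_mul_pos_right (hHb ▸ mul_pos (sub_pos.mpr hexp) ha) hH.le

theorem log_one_add_mul_div_eq (ha : a ≠ 0) (hw : w * exp (w + 1) = H * χ - 1)
    (hab : H * (χ * a + b) = (1 + w) * exp (w + 1) * a) :
    log (1 + H * b / a) = H * (χ * a + b) / (a + H * b) := by
  have hsum := add_mul_eq_exp_mul hw hab
  calc log (1 + H * b / a) = log (exp (w + 1)) := by
        rw [one_add_div ha, hsum, mul_div_cancel_right₀ _ ha]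
    _ = 1 + w := by rw [log_exp, add_comm]
    _ = H * (χ * a + b) / (a + H * b) := by
        rw [hab, hsum, mul_assoc, mul_div_cancel_right₀ _ (mul_ne_zero (exp_ne_zero _) ha)]

end Stationarity

end EnergyHarvesting

open EnergyHarvesting

/-- The condition `-1 < w` selects the principal Lambert branch, on which `w` is negative when
`H * χ < 1`. -/
theorem stmt_3_general {T τ ε χ H c w θ : ℝ} (hT : T ≠ 0) (hH : 0 < H) (hHχ : H * χ ≠ 1)
    (hc : c = χ * (T - τ) - ε) (hcpos : 0 < c) (hw1 : -1 < w)
    (hlam : w * exp w = (H * χ - 1) / exp 1)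
    (hθ : θ = (T - τ) / T - w * H * c / (T * (H * χ - 1) * (1 + w))) :
    0 < T - θ * T - τ ∧ 0 < χ * θ * T - ε ∧
      log (1 + H * (χ * θ * T - ε) / (T - θ * T - τ))
        = H * (χ * (T - θ * T - τ) + (χ * θ * T - ε))
            / ((T - θ * T - τ) + H * (χ * θ * T - ε)) := by
  have hw := mul_exp_add_one_of_mul_exp_eq_div hlam
  have htime := transmission_time_eq hT (sub_ne_zero.mpr hHχ) hw hθ
  have henergy : χ * (T - θ * T - τ) + (χ * θ * T - ε) = c := by rw [hc]; ring
  have hden : 0 < (1 + w) * exp (w + 1) := mul_pos (by linarith) (exp_pos _)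
  have ha : 0 < T - θ * T - τ := htime ▸ div_pos (mul_pos hH hcpos) hden
  have hab : H * (χ * (T - θ * T - τ) + (χ * θ * T - ε)) =
      (1 + w) * exp (w + 1) * (T - θ * T - τ) := by
    rw [henergy, htime, mul_div_cancel₀ _ hden.ne']
  exact ⟨ha, residual_energy_pos hH ha hw1 hw hab, log_one_add_mul_div_eq ha.ne' hw hab⟩

/-- Verification part of Theorem 1: the closed-form harvesting ratio `θ*` gives
positive transmission time `a*` and residual energy `b*`, and satisfies the
stationarity equation. -/
theorem stmt_3 (T τ ε χ H : ℝ)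
    (hT : 0 < T) (hτ0 : 0 < τ) (hτT : τ < T) (hε : 0 < ε) (hχ : 0 < χ)
    (hH : 0 < H) (hHχ : H * χ > 1)
    (c : ℝ) (hc : c = χ * (T - τ) - ε) (hcpos : 0 < c)
    (w : ℝ) (hw : 0 < w)
    (hlam : w * Real.exp w = (H * χ - 1) / Real.exp 1)
    (θstar : ℝ)
    (hθ : θstar = (T - τ) / T - w * H * c / (T * (H * χ - 1) * (1 + w))) :
    0 < T - θstar * T - τ ∧ 0 < χ * θstar * T - ε ∧
      Real.log (1 + H * (χ * θstar * T - ε) / (T - θstar * T - τ))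
        = H * (χ * (T - θstar * T - τ) + (χ * θstar * T - ε))
            / ((T - θstar * T - τ) + H * (χ * θstar * T - ε)) := by
  exact stmt_3_general hT.ne' hH hHχ.ne' hc hcpos (by linarith) hlam hθ
end

section
/- Fix real parameters T, τ, ε, χ, H with T > 0, 0 < τ < T, ε > 0, χ > 0, H > 0 and H·χ > 1. Set c := χ·(T − τ) − ε and assume c > 0. Let w > 0 satisfy w·exp(w) = (H·χ − 1)/e, and define θ* := (T − τ)/T − w·H·c / (T·(H·χ − 1)·(1 + w)). Then θ* lies in the open interval I = (ε/(χT), (T − τ)/T), and the rate function f(θ) = (1 − θ − τ/T)·log₂(1 + H·(χθT − ε)/(T − θT − τ)) attains its maximum over I at θ = θ*. (Theorem 1: the closed-form harvesting ratio θ* is the optimal harvesting ratio.) -/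
/-!
Write `x = T - θ T - τ` for the remaining transmission time. Up to the factor `1 / (T log 2)` the
rate is `x log (C / x - k)` with `C = H c` and `k = H χ - 1`. The Lambert equation says that
`k = (s - 1) exp s` for `s = 1 + w`. The tangent of `log` at `exp s` is the line
`y ↦ (y + k) / exp s`, and along `y = C / x - k` multiplying it by `x` gives the constant
`C / exp s`. This constant bounds the rate and is attained where `C / x - k = exp s`, that is, at
`x = C / (s exp s)`.
-/

section TangentBound

open Real Set

variable {C s x y : ℝ}

theorem log_le_add_div_exp (hy : 0 < y) (s : ℝ) : log y ≤ (y + (s - 1) * exp s) / exp s := by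
  have tangent := log_le_sub_one_of_pos (div_pos hy (exp_pos s))
  rw [log_div hy.ne' (exp_ne_zero s), log_exp] at tangent
  rw [add_div, mul_div_cancel_right₀ _ (exp_ne_zero s)]
  linarith

theorem mul_log_div_sub_le (hx : 0 < x) (hxC : (s - 1) * exp s * x < C) :
    x * log (C / x - (s - 1) * exp s) ≤ C / exp s := by
  have hy : 0 < C / x - (s - 1) * exp s := sub_pos.2 ((lt_div_iff₀ hx).2 hxC)
  calc x * log (C / x - (s - 1) * exp s)
      ≤ x * ((C / x - (s - 1) * exp s + (s - 1) * exp s) / exp s) := by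
        gcongr
        exact log_le_add_div_exp hy s
    _ = C / exp s := by rw [sub_add_cancel, ← mul_div_assoc, mul_div_cancel₀ _ hx.ne']

theorem mul_log_div_sub_eq (hC : C ≠ 0) (hs : s ≠ 0) :
    C / (s * exp s) * log (C / (C / (s * exp s)) - (s - 1) * exp s) = C / exp s := by
  have hy : C / (C / (s * exp s)) - (s - 1) * exp s = exp s := by
    rw [div_div_cancel₀ hC]
    ring
  rw [hy, log_exp]
  field_simp

theorem isMaxOn_mul_log_div_sub (hC : C ≠ 0) (hs : s ≠ 0) :
    IsMaxOn (fun x ↦ x * log (C / x - (s - 1) * exp s)) {x | 0 < x ∧ (s - 1) * exp s * x < C}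
      (C / (s * exp s)) := fun _ hx ↦
  (mul_log_div_sub_le hx.1 hx.2).trans_eq (mul_log_div_sub_eq hC hs).symm

theorem sub_one_mul_exp_add_one_mul_lt (hC : 0 < C) (hs : 0 < s) :
    ((s - 1) * exp s + 1) * (C / (s * exp s)) < C := by
  have hexp : (s - 1) * exp s + 1 < s * exp s := by linarith [one_lt_exp_iff.2 hs]
  rw [← mul_div_assoc, div_lt_iff₀ (by positivity), mul_comm C]
  gcongr

end TangentBound

section HarvestingRatio

open Real Set

variable {T τ ε χ H θ s w k : ℝ}

/-- The achievable rate, in bits, as a function of the harvesting ratio `θ`: the remaining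
transmission time is `T - θ * T - τ`, the residual harvested energy is `χ * θ * T - ε`, and `H`
converts their quotient, the transmit power, into a signal-to-noise ratio. It is meaningful where
both are positive; elsewhere the division and the logarithm may take junk values. -/
noncomputable def achievableRate (T τ ε χ H θ : ℝ) : ℝ :=
  (1 - θ - τ / T) * logb 2 (1 + H * (χ * θ * T - ε) / (T - θ * T - τ))

theorem achievableRate_eq_mul_log (hT : T ≠ 0) (hθ : T - θ * T - τ ≠ 0) :
    achievableRate T τ ε χ H θ = (T * log 2)⁻¹ * ((T - θ * T - τ) *
      log (H * (χ * (T - τ) - ε) / (T - θ * T - τ) - (H * χ - 1))) := by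
  have htime : 1 - θ - τ / T = (T - θ * T - τ) / T := by field_simp
  have hsnr : 1 + H * (χ * θ * T - ε) / (T - θ * T - τ) =
      H * (χ * (T - τ) - ε) / (T - θ * T - τ) - (H * χ - 1) := by
    rw [show H * (χ * θ * T - ε) = H * (χ * (T - τ) - ε) - H * χ * (T - θ * T - τ) by ring,
      sub_div, mul_div_cancel_right₀ _ hθ]
    ring
  rw [achievableRate, htime, hsnr, logb]
  field_simp

theorem mem_Ioo_harvestingRatio_iff (hT : 0 < T) (hχ : 0 < χ) :
    θ ∈ Ioo (ε / (χ * T)) ((T - τ) / T) ↔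
      0 < T - θ * T - τ ∧ χ * (T - θ * T - τ) < χ * (T - τ) - ε := by
  rw [mem_Ioo, div_lt_iff₀ (mul_pos hχ hT), lt_div_iff₀ hT, and_comm]
  constructor <;> rintro ⟨htime, henergy⟩ <;> constructor <;> linarith

theorem mem_Ioo_harvestingRatio (hT : 0 < T) (hχ : 0 < χ) (hH : 0 < H)
    (hc : 0 < χ * (T - τ) - ε) (hs : 0 < s) (hk : H * χ - 1 = (s - 1) * exp s)
    (hθ : T - θ * T - τ = H * (χ * (T - τ) - ε) / (s * exp s)) :
    θ ∈ Ioo (ε / (χ * T)) ((T - τ) / T) := by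
  rw [mem_Ioo_harvestingRatio_iff hT hχ, hθ]
  refine ⟨by positivity, lt_of_mul_lt_mul_left ?_ hH.le⟩
  rw [← mul_assoc, sub_eq_iff_eq_add.1 hk]
  exact sub_one_mul_exp_add_one_mul_lt (mul_pos hH hc) hs

theorem isMaxOn_achievableRate (hT : 0 < T) (hχ : 0 < χ) (hH : 0 < H)
    (hc : 0 < χ * (T - τ) - ε) (hs : 0 < s) (hk : H * χ - 1 = (s - 1) * exp s)
    (hθ : T - θ * T - τ = H * (χ * (T - τ) - ε) / (s * exp s)) :
    IsMaxOn (achievableRate T τ ε χ H) (Ioo (ε / (χ * T)) ((T - τ) / T)) θ := by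
  intro θ' hθ'
  obtain ⟨htime, henergy⟩ := (mem_Ioo_harvestingRatio_iff hT hχ).1 hθ'
  have hC : 0 < H * (χ * (T - τ) - ε) := mul_pos hH hc
  have hθ₀ : 0 < T - θ * T - τ := hθ ▸ div_pos hC (mul_pos hs (exp_pos s))
  have hdom : (s - 1) * exp s * (T - θ' * T - τ) < H * (χ * (T - τ) - ε) := by
    rw [← hk]
    linarith [mul_lt_mul_of_pos_left henergy hH]
  change achievableRate T τ ε χ H θ' ≤ achievableRate T τ ε χ H θ
  rw [achievableRate_eq_mul_log hT.ne' htime.ne', achievableRate_eq_mul_log hT.ne' hθ₀.ne',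
    hk, hθ]
  exact mul_le_mul_of_nonneg_left
    (isMaxOn_mul_log_div_sub hC.ne' hs.ne' ⟨htime, hdom⟩) (by positivity)

theorem eq_mul_exp_one_add_of_mul_exp_eq (h : w * exp w = k / exp 1) : k = w * exp (1 + w) := by
  rw [exp_add, mul_left_comm, h, mul_div_cancel₀ _ (exp_ne_zero 1)]

end HarvestingRatio

/- Cancelling `w` against `H χ - 1 = w exp (1 + w)` in the closed form of `θstar` keeps it
meaningful at `H χ = 1`, where `w = 0`. -/
theorem stmt_4_general (T τ ε χ H : ℝ) (hT : 0 < T) (hχ : 0 < χ) (hH : 0 < H)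
    (c : ℝ) (hc : c = χ * (T - τ) - ε) (hcpos : 0 < c)
    (w : ℝ) (hw : -1 < w) (hlam : w * Real.exp w = (H * χ - 1) / Real.exp 1)
    (θstar : ℝ)
    (hθ : θstar = (T - τ) / T - H * c / (T * ((1 + w) * Real.exp (1 + w)))) :
    θstar ∈ Set.Ioo (ε / (χ * T)) ((T - τ) / T) ∧
      IsMaxOn (achievableRate T τ ε χ H) (Set.Ioo (ε / (χ * T)) ((T - τ) / T)) θstar := by
  have hs : 0 < 1 + w := by linarith
  have hk : H * χ - 1 = (1 + w - 1) * Real.exp (1 + w) := by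
    rw [add_sub_cancel_left, eq_mul_exp_one_add_of_mul_exp_eq hlam]
  have htime : T - θstar * T - τ = H * c / ((1 + w) * Real.exp (1 + w)) := by
    rw [hθ]
    field_simp
    ring
  subst hc
  exact ⟨mem_Ioo_harvestingRatio hT hχ hH hcpos hs hk htime,
    isMaxOn_achievableRate hT hχ hH hcpos hs hk htime⟩

/-- Theorem 1: the closed-form harvesting ratio `θ*` lies in the feasible
interval `(ε/(χT), (T − τ)/T)` and maximizes the rate function there. -/
theorem stmt_4 (T τ ε χ H : ℝ)
    (hT : 0 < T) (hτ0 : 0 < τ) (hτT : τ < T) (hε : 0 < ε) (hχ : 0 < χ)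
    (hH : 0 < H) (hHχ : H * χ > 1)
    (c : ℝ) (hc : c = χ * (T - τ) - ε) (hcpos : 0 < c)
    (w : ℝ) (hw : 0 < w)
    (hlam : w * Real.exp w = (H * χ - 1) / Real.exp 1)
    (θstar : ℝ)
    (hθ : θstar = (T - τ) / T - w * H * c / (T * (H * χ - 1) * (1 + w))) :
    θstar ∈ Set.Ioo (ε / (χ * T)) ((T - τ) / T) ∧
      IsMaxOn
        (fun θ : ℝ =>
          (1 - θ - τ / T) *
            Real.logb 2 (1 + H * (χ * θ * T - ε) / (T - θ * T - τ)))
        (Set.Ioo (ε / (χ * T)) ((T - τ) / T)) θstar := by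
  refine stmt_4_general T τ ε χ H hT hχ hH c hc hcpos w (by linarith) hlam θstar ?_
  rw [hθ, eq_mul_exp_one_add_of_mul_exp_eq hlam]
  field_simp
end

section
/- Fix real parameters T, τ, ε, χ, H with T > 0, 0 < τ < T, ε > 0, χ > 0, H > 0, H·χ > 1, and assume ε/(χT) < (T − τ)/T. Then the rate function f(θ) = (1 − θ − τ/T)·log₂(1 + H·(χθT − ε)/(T − θT − τ)) is strictly concave on the open interval I = (ε/(χT), (T − τ)/T). (Lemma 1 of the paper: the objective function of problem P3 is concave in the harvesting ratio θ.) -/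
/-! The rate is the perspective `a • g (b / a)` of `g = logb 2`: with `a θ = 1 - θ - τ / T` the
argument of the logarithm is a quotient `b / a` of affine functions of `θ`. At a convex combination
`p • x + q • y` this quotient is the average of its values at `x` and `y` with weights `p a(x)` and
`q a(y)`, normalised by their sum `a (p • x + q • y)`, so the perspective inherits the strict
concavity of `g` wherever `b / a` is injective, i.e. where the linear fractional map is
nondegenerate. -/

open Set

section Perspective

variable {𝕜 E F β : Type*} [Field 𝕜] [LinearOrder 𝕜] [IsStrictOrderedRing 𝕜]
  [AddCommGroup E] [Module 𝕜 E] [AddCommGroup F] [Module 𝕜 F]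
  [AddCommGroup β] [PartialOrder β] [Module 𝕜 β] [PosSMulStrictMono 𝕜 β]

theorem strictConcaveOn_perspective {s : Set E} {t : Set F} {g : F → β}
    (hg : StrictConcaveOn 𝕜 t g) (hs : Convex 𝕜 s) (a : E →ᵃ[𝕜] 𝕜) (b : E →ᵃ[𝕜] F)
    (ha : ∀ x ∈ s, 0 < a x) (hmaps : MapsTo (fun x ↦ (a x)⁻¹ • b x) s t)
    (hinj : InjOn (fun x ↦ (a x)⁻¹ • b x) s) :
    StrictConcaveOn 𝕜 s (fun x ↦ a x • g ((a x)⁻¹ • b x)) := by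
  refine ⟨hs, fun x hx y hy hxy p q hp hq hpq ↦ ?_⟩
  have hax : 0 < a x := ha x hx
  have hay : 0 < a y := ha y hy
  have a_combo : a (p • x + q • y) = p * a x + q * a y := Convex.combo_affine_apply hpq
  have b_combo : b (p • x + q • y) = p • b x + q • b y := Convex.combo_affine_apply hpq
  set m := a (p • x + q • y)
  have hm : 0 < m := by rw [a_combo]; positivity
  have hweights : p * a x / m + q * a y / m = 1 := by
    rw [← add_div, ← a_combo, div_self hm.ne']
  have quotient_combo : (p * a x / m) • (a x)⁻¹ • b x + (q * a y / m) • (a y)⁻¹ • b y =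
      m⁻¹ • b (p • x + q • y) := by
    rw [b_combo, smul_add]
    simp only [smul_smul]
    congr 2 <;> field_simp
  have jensen := hg.2 (hmaps hx) (hmaps hy) (hinj.ne hx hy hxy) (by positivity) (by positivity)
    hweights
  rw [quotient_combo] at jensen
  calc p • a x • g ((a x)⁻¹ • b x) + q • a y • g ((a y)⁻¹ • b y)
      = m • ((p * a x / m) • g ((a x)⁻¹ • b x) + (q * a y / m) • g ((a y)⁻¹ • b y)) := by
        simp only [smul_add, smul_smul, mul_div_cancel₀ _ hm.ne']
    _ < m • g (m⁻¹ • b (p • x + q • y)) := smul_lt_smul_of_pos_left jensen hm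

end Perspective

theorem injOn_linearFractional {K : Type*} [Field K] {α β γ δ : K} (hdet : α * δ - β * γ ≠ 0) :
    InjOn (fun x ↦ (α * x + β) / (γ * x + δ)) {x | γ * x + δ ≠ 0} := by
  intro x hx y hy hxy
  have cross : (α * x + β) * (γ * y + δ) = (α * y + β) * (γ * x + δ) :=
    (div_eq_div_iff hx hy).1 hxy
  have : (α * δ - β * γ) * (x - y) = 0 := by linear_combination cross
  exact sub_eq_zero.1 ((mul_eq_zero.1 this).resolve_left hdet)

theorem strictConcaveOn_logb_Ioi {c : ℝ} (hc : 1 < c) :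
    StrictConcaveOn ℝ (Ioi 0) (Real.logb c) := by
  refine ⟨convex_Ioi 0, fun x hx y hy hxy p q hp hq hpq ↦ ?_⟩
  have := div_lt_div_of_pos_right (strictConcaveOn_log_Ioi.2 hx hy hxy hp hq hpq)
    (Real.log_pos hc)
  simpa only [Real.logb, smul_eq_mul, add_div, mul_div_assoc] using this

theorem strictConcaveOn_mul_logb_linearFractional {c α β γ δ : ℝ} {s : Set ℝ} (hc : 1 < c)
    (hs : Convex ℝ s) (hdet : α * δ - β * γ ≠ 0) (hnum : ∀ x ∈ s, 0 < α * x + β)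
    (hden : ∀ x ∈ s, 0 < γ * x + δ) :
    StrictConcaveOn ℝ s
      (fun x ↦ (γ * x + δ) * Real.logb c ((α * x + β) / (γ * x + δ))) := by
  let a : ℝ →ᵃ[ℝ] ℝ := γ • AffineMap.id ℝ ℝ + AffineMap.const ℝ ℝ δ
  let b : ℝ →ᵃ[ℝ] ℝ := α • AffineMap.id ℝ ℝ + AffineMap.const ℝ ℝ β
  have quotient_eq (x : ℝ) : (a x)⁻¹ • b x = (α * x + β) / (γ * x + δ) :=
    inv_mul_eq_div _ _
  have hmaps : MapsTo (fun x ↦ (a x)⁻¹ • b x) s (Ioi 0) := fun x hx ↦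
    smul_pos (inv_pos.2 (hden x hx)) (hnum x hx)
  have hinj : InjOn (fun x ↦ (a x)⁻¹ • b x) s := by
    simp only [quotient_eq]
    exact (injOn_linearFractional hdet).mono fun x hx ↦ (hden x hx).ne'
  have := strictConcaveOn_perspective (strictConcaveOn_logb_Ioi hc) hs a b hden hmaps hinj
  simp only [quotient_eq] at this
  exact this

theorem one_add_mul_div_eq_linearFractional {K : Type*} [Field K] {T τ ε χ H θ : K} (hT : T ≠ 0)
    (hden : -1 * θ + (1 - τ / T) ≠ 0) :
    1 + H * (χ * θ * T - ε) / (T - θ * T - τ) =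
      ((H * χ - 1) * θ + (1 - τ / T - H * (ε / T))) / (-1 * θ + (1 - τ / T)) := by
  have time_eq : T - θ * T - τ = T * (-1 * θ + (1 - τ / T)) := by field_simp; ring
  have energy_eq : χ * θ * T - ε = T * (χ * θ - ε / T) := by field_simp
  rw [time_eq, energy_eq, mul_left_comm, mul_div_mul_left _ _ hT, one_add_div hden]
  ring

theorem stmt_5_general {c T τ ε χ H : ℝ} (hc : 1 < c) (hT : 0 < T) (hχ : 0 < χ) (hH : 0 < H)
    (hI : ε / (χ * T) < (T - τ) / T) :
    StrictConcaveOn ℝ (Ioo (ε / (χ * T)) ((T - τ) / T))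
      (fun θ ↦ (1 - θ - τ / T) *
        Real.logb c (1 + H * (χ * θ * T - ε) / (T - θ * T - τ))) := by
  have energy_pos {θ : ℝ} (hθ : ε / (χ * T) < θ) : 0 < H * (χ * θ - ε / T) := by
    rw [← div_div, div_right_comm, div_lt_iff₀' hχ] at hθ
    exact mul_pos hH (sub_pos.2 hθ)
  have endpoint_eq : (T - τ) / T = 1 - τ / T := by rw [sub_div, div_self hT.ne']
  have hden : ∀ θ ∈ Ioo (ε / (χ * T)) ((T - τ) / T), 0 < -1 * θ + (1 - τ / T) := by
    rintro θ ⟨-, hθ⟩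
    linarith
  have hnum : ∀ θ ∈ Ioo (ε / (χ * T)) ((T - τ) / T),
      0 < (H * χ - 1) * θ + (1 - τ / T - H * (ε / T)) := by
    intro θ hθ
    linarith [hden θ hθ, energy_pos hθ.1]
  -- The determinant is the scaled residual energy at the right endpoint of the interval.
  have hdet : (H * χ - 1) * (1 - τ / T) - (1 - τ / T - H * (ε / T)) * -1 ≠ 0 := by
    have := energy_pos hI
    rw [endpoint_eq] at this
    linarith
  refine (strictConcaveOn_mul_logb_linearFractional hc (convex_Ioo _ _) hdet hnum hden).congr ?_
  intro θ hθ
  have prefactor_eq : -1 * θ + (1 - τ / T) = 1 - θ - τ / T := by ring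
  beta_reduce
  rw [one_add_mul_div_eq_linearFractional hT.ne' (hden θ hθ).ne', prefactor_eq]

/-- Lemma 1 of the paper: the rate function is strictly concave on the
feasible interval `(ε/(χT), (T − τ)/T)` when `H * χ > 1`. -/
theorem stmt_5 (T τ ε χ H : ℝ)
    (hT : 0 < T) (hτ0 : 0 < τ) (hτT : τ < T) (hε : 0 < ε) (hχ : 0 < χ)
    (hH : 0 < H) (hHχ : H * χ > 1)
    (hI : ε / (χ * T) < (T - τ) / T) :
    StrictConcaveOn ℝ (Set.Ioo (ε / (χ * T)) ((T - τ) / T))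
      (fun θ : ℝ =>
        (1 - θ - τ / T) *
          Real.logb 2 (1 + H * (χ * θ * T - ε) / (T - θ * T - τ))) :=
  stmt_5_general one_lt_two hT hχ hH hI
end

section
/- Fix real parameters T, τ, ε, χ, H with T > 0, 0 < τ < T, ε > 0, χ > 0, H > 0, H·χ > 1, and assume ε/(χT) < (T − τ)/T. Then the function θ ↦ (1 − θ − τ/T)·log₂(T − θT − τ + H·(χθT − ε)) is strictly concave on the open interval I = (ε/(χT), (T − τ)/T). (Part A in the proof of Lemma 1: the first term in the decomposition of the rate function is concave when Hχ > 1.) -/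
/-!
As a function of `θ`, the rate is a positive decreasing affine factor times the logarithm of a
positive increasing affine function, the slope `T * (H * χ - 1)` of the latter being positive.
For `f` affine and `p + q = 1`, Jensen's gap of the product `f • g` is `f (p • x + q • y)` times
that of `g` plus `p * q * (f x - f y) * (g y - g x)`, and the last term is nonnegative as soon as
`f` and `g` vary in opposite directions. Because `f` is affine and not merely concave, this allows
`g`, here a logarithm, to change sign.
-/

open Set

section Affine

variable {𝕜 E F β : Type*}

lemma strictConcaveOn_comp_affineMap [Ring 𝕜] [PartialOrder 𝕜] [AddCommGroup E] [Module 𝕜 E]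
    [AddCommGroup F] [Module 𝕜 F] [AddCommMonoid β] [PartialOrder β] [SMul 𝕜 β]
    {s : Set F} {g : F → β} {f : E →ᵃ[𝕜] F}
    (hg : StrictConcaveOn 𝕜 s g) (hf : Function.Injective f) :
    StrictConcaveOn 𝕜 (f ⁻¹' s) (g ∘ f) := by
  refine ⟨hg.1.affine_preimage f, fun x hx y hy hxy p q hp hq hpq ↦ ?_⟩
  simp only [Function.comp_apply, Convex.combo_affine_apply hpq]
  exact hg.2 hx hy (hf.ne hxy) hp hq hpq

lemma strictConcaveOn_affineMap_smul [CommRing 𝕜] [LinearOrder 𝕜] [IsStrictOrderedRing 𝕜]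
    [AddCommGroup E] [Module 𝕜 E] [AddCommGroup β] [LinearOrder β] [IsOrderedAddMonoid β]
    [Module 𝕜 β] [IsStrictOrderedModule 𝕜 β] {s : Set E} {f : E →ᵃ[𝕜] 𝕜} {g : E → β}
    (hg : StrictConcaveOn 𝕜 s g) (hf : ∀ ⦃x⦄, x ∈ s → 0 < f x) (hfg : AntivaryOn f g s) :
    StrictConcaveOn 𝕜 s (⇑f • g) := by
  refine ⟨hg.1, fun x hx y hy hxy p q hp hq hpq ↦ ?_⟩
  have rearrangement : f x • g x + f y • g y ≤ f x • g y + f y • g x :=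
    hfg.smul_add_smul_le_smul_add_smul hx hy
  have f_combo : f (p • x + q • y) = p * f x + q * f y := Convex.combo_affine_apply hpq
  calc p • f x • g x + q • f y • g y
      = f (p • x + q • y) • (p • g x + q • g y) +
          (p * q) • ((f x • g x + f y • g y) - (f x • g y + f y • g x)) := by
        obtain rfl : q = 1 - p := eq_sub_of_add_eq' hpq
        rw [f_combo]
        module
    _ ≤ f (p • x + q • y) • (p • g x + q • g y) :=
        add_le_of_nonpos_right <|
          smul_nonpos_of_nonneg_of_nonpos (mul_pos hp hq).le (sub_nonpos.2 rearrangement)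
    _ < f (p • x + q • y) • g (p • x + q • y) :=
        smul_lt_smul_of_pos_left (hg.2 hx hy hxy hp hq hpq) (hf (hg.1 hx hy hp.le hq.le hpq))

end Affine

lemma strictConcaveOn_logb_Ioi_s7 {b : ℝ} (hb : 1 < b) :
    StrictConcaveOn ℝ (Ioi 0) (Real.logb b) := by
  refine (strictConcaveOn_affineMap_smul (f := AffineMap.const ℝ ℝ (Real.log b)⁻¹)
    strictConcaveOn_log_Ioi (fun _ _ ↦ inv_pos.2 (Real.log_pos hb))
    (antivaryOn_const_left _ _ _)).congr fun x _ ↦ ?_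
  exact inv_mul_eq_div _ _

lemma strictConcaveOn_sub_mul_logb {b k : ℝ} (hb : 1 < b) (hk : 0 < k) (a c : ℝ) :
    StrictConcaveOn ℝ (Ioo (-c / k) a) fun x ↦ (a - x) * Real.logb b (k * x + c) := by
  let f : ℝ →ᵃ[ℝ] ℝ := AffineMap.const ℝ ℝ a - AffineMap.id ℝ ℝ
  let u : ℝ →ᵃ[ℝ] ℝ := k • AffineMap.id ℝ ℝ + AffineMap.const ℝ ℝ c
  have u_strictMono : StrictMono u := fun x y hxy ↦
    add_lt_add_left (mul_lt_mul_of_pos_left hxy hk) c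
  have u_pos : Ioo (-c / k) a ⊆ u ⁻¹' Ioi 0 := fun x hx ↦
    neg_lt_iff_pos_add.1 ((div_lt_iff₀' hk).1 hx.1)
  have concave : StrictConcaveOn ℝ (Ioo (-c / k) a) (Real.logb b ∘ u) :=
    (strictConcaveOn_comp_affineMap (strictConcaveOn_logb_Ioi_s7 hb) u_strictMono.injective).subset
      u_pos (convex_Ioo _ _)
  have mono : MonotoneOn (Real.logb b ∘ u) (Ioo (-c / k) a) :=
    (Real.strictMonoOn_logb hb).monotoneOn.comp (u_strictMono.monotone.monotoneOn _) u_pos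
  have anti : AntitoneOn f (Ioo (-c / k) a) := fun _ _ _ _ hxy ↦ sub_le_sub_left hxy a
  exact strictConcaveOn_affineMap_smul concave (fun _ hx ↦ sub_pos.2 hx.2) (anti.antivaryOn mono)

/-- Part A in the proof of Lemma 1: the first term of the decomposed rate
function is strictly concave on the feasible interval when `H * χ > 1`. -/
theorem stmt_7 (T τ ε χ H : ℝ)
    (hT : 0 < T) (hτ0 : 0 < τ) (hτT : τ < T) (hε : 0 < ε) (hχ : 0 < χ)
    (hH : 0 < H) (hHχ : H * χ > 1)
    (hI : ε / (χ * T) < (T - τ) / T) :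
    StrictConcaveOn ℝ (Set.Ioo (ε / (χ * T)) ((T - τ) / T))
      (fun θ : ℝ =>
        (1 - θ - τ / T) *
          Real.logb 2 (T - θ * T - τ + H * (χ * θ * T - ε))) := by
  have slope_pos : 0 < T * (H * χ - 1) := mul_pos hT (sub_pos.2 hHχ)
  have right_end : (T - τ) / T = 1 - τ / T := by rw [sub_div, div_self hT.ne']
  have left_end : -(T - τ - H * ε) / (T * (H * χ - 1)) ≤ ε / (χ * T) := by
    have value_at_left_end : ε / (χ * T) * (T * (H * χ - 1)) + (T - τ - H * ε) =
        T * ((T - τ) / T - ε / (χ * T)) := by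
      field_simp
      ring
    rw [div_le_iff₀ slope_pos, neg_le_iff_add_nonneg, value_at_left_end]
    exact (mul_pos hT (sub_pos.2 hI)).le
  rw [right_end]
  refine ((strictConcaveOn_sub_mul_logb one_lt_two slope_pos (1 - τ / T) (T - τ - H * ε)).subset
    (Ioo_subset_Ioo_left left_end) (convex_Ioo _ _)).congr fun θ _ ↦ ?_
  ring_nf
end
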